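/- In 𝔽₂[t₁,…,t₆], let Q be the product over all subsets S of {1,…,6} of odd cardinality (|S| = 1, 3, or 5) of (1 + Σ_{i∈S} t_i). Then the homogeneous component of Q of degree 32 is congruent to e₆²·(e₅⁴ + e₂⁴e₆² + e₂²e₃²e₅² + e₃⁴e₄²) modulo the ideal generated by e₁. -/

import Mathlib

open MvPolynomial Finset

/-- The `i`-th elementary symmetric polynomial in `𝔽₂[t₁,…,t₆]`. -/
noncomputable def e (i : ℕ) : MvPolynomial (Fin 6) (ZMod 2) :=
  esymm (Fin 6) (ZMod 2) i

/-- `Q`: the product over all subsets `S ⊆ {1,…,6}` of odd cardinality of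
`(1 + Σ_{i∈S} t_i)` in `𝔽₂[t₁,…,t₆]`, representing the mod 2 total Chern class
of `λ¹ ⊕ λ³ ⊕ λ⁵ = r̃₆*((Δ₁₂⁻)_ℂ)` of `SU(6)`. -/
noncomputable def Q : MvPolynomial (Fin 6) (ZMod 2) :=
  ∏ s ∈ (univ : Finset (Fin 6)).powerset.filter (fun s => Odd s.card),
    (1 + ∑ i ∈ s, X i)

/-- The top homogeneous component of `∏ (1 + L_i)`, with every `L_i` linear, is `∏ L_i`. -/
theorem top_component {ι : Type*} [DecidableEq ι] (A : Finset ι)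
    (L : ι → MvPolynomial (Fin 6) (ZMod 2)) (hL : ∀ i ∈ A, (L i).IsHomogeneous 1) :
    homogeneousComponent A.card (∏ i ∈ A, (1 + L i)) = ∏ i ∈ A, L i := by
  rw [Finset.prod_one_add, map_sum]
  rw [Finset.sum_eq_single A]
  · have h : (∏ i ∈ A, L i).IsHomogeneous (∑ i ∈ A, 1) :=
      IsHomogeneous.prod A L (fun _ => 1) hL
    rw [homogeneousComponent_of_mem ((mem_homogeneousSubmodule _ _).2 h)]
    simp
  · intro B hB hne
    have hBA := Finset.mem_powerset.1 hB
    have h : (∏ i ∈ B, L i).IsHomogeneous (∑ i ∈ B, 1) :=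
      IsHomogeneous.prod B L (fun _ => 1) (fun i hi => hL i (hBA hi))
    rw [homogeneousComponent_of_mem ((mem_homogeneousSubmodule _ _).2 h), if_neg]
    intro hc
    apply hne
    apply Finset.eq_of_subset_of_card_le hBA
    simp at hc
    omega
  · intro h
    simp at h

/-- Triples inside `{a,b,c,d}`, in characteristic two. -/
theorem triples_four {R : Type*} [CommRing R] [CharP R 2] (a b c d p s q r : R)
    (hp : p = a + b + c + d)
    (hs : s = a*b + a*c + a*d + b*c + b*d + c*d)
    (hq : q = a*b*c + a*b*d + a*c*d + b*c*d) (hr : r = a*b*c*d) :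
    (a+b+c)*(a+b+d)*(a+c+d)*(b+c+d) = p^2*s + p*q + r := by
  subst hp hs hq hr
  grind

/-- Triples with one entry `z` and two in `{a,b,c,d}`, in characteristic two. -/
theorem pairs_four {R : Type*} [CommRing R] [CharP R 2] (a b c d z w p s q r : R)
    (hp : p = a + b + c + d)
    (hs : s = a*b + a*c + a*d + b*c + b*d + c*d)
    (hq : q = a*b*c + a*b*d + a*c*d + b*c*d) (hr : r = a*b*c*d)
    (hw : w = z^2 + p * z) :
    ((a+b+z)*(c+d+z))*((a+c+z)*(b+d+z))*((a+d+z)*(b+c+z))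
      = w^3 + w*(s^2 + p*q) + p*s*q + p^2*r + q^2 := by
  have h1 : (a+b+z)*(c+d+z) = w + (a+b)*(c+d) := by subst hw hp; ring
  have h2 : (a+c+z)*(b+d+z) = w + (a+c)*(b+d) := by subst hw hp; ring
  have h3 : (a+d+z)*(b+c+z) = w + (a+d)*(b+c) := by subst hw hp; ring
  rw [h1, h2, h3]
  clear h1 h2 h3 hw
  subst hp hs hq hr
  grind

/-- The final identity. -/
theorem final_identity {R : Type*} [CommRing R] [CharP R 2] (z p s q r : R) :
    (p^2*s + p*q + r) *
     ((z^2+p*z)^3 + (z^2+p*z)*(s^2 + p*q) + p*s*q + p^2*r + q^2)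
      = (z*r + (p+z)*(r+z*q))^2 + (s+z*p+(p+z)*(p+z))^2*((p+z)*(z*r))
        + (s+z*p+(p+z)*(p+z))*(q+z*s+(p+z)*(s+z*p))*(z*r + (p+z)*(r+z*q))
        + (q+z*s+(p+z)*(s+z*p))^2*(r+z*q+(p+z)*(q+z*s)) := by
  grind

theorem filt_eq : (univ : Finset (Fin 6)).powerset.filter (fun s => Odd s.card) =
   {{0},{1},{2},{3},{4},{5},
    {0,1,2},{0,1,3},{0,1,4},{0,1,5},{0,2,3},{0,2,4},{0,2,5},{0,3,4},{0,3,5},{0,4,5},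
    {1,2,3},{1,2,4},{1,2,5},{1,3,4},{1,3,5},{1,4,5},{2,3,4},{2,3,5},{2,4,5},{3,4,5},
    {1,2,3,4,5},{0,2,3,4,5},{0,1,3,4,5},{0,1,2,4,5},{0,1,2,3,5},{0,1,2,3,4}} := by
  decide +kernel

/-- Evaluation of the product of all odd subset sums when `t₀ = t₁ + ⋯ + t₅`. -/
theorem prod_odd {R : Type*} [CommRing R] [CharP R 2] (t : Fin 6 → R)
    (h0 : t 0 = t 1 + t 2 + t 3 + t 4 + t 5) :
    ∏ s ∈ (univ : Finset (Fin 6)).powerset.filter (fun s => Odd s.card), (∑ i ∈ s, t i) =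
      (t 0 * (t 1 * t 2 * t 3 * t 4) * t 5 *
        (((t 1+t 2+t 3)*(t 1+t 2+t 4)*(t 1+t 3+t 4)*(t 2+t 3+t 4)) *
        (((t 1+t 2+t 5)*(t 3+t 4+t 5))*((t 1+t 3+t 5)*(t 2+t 4+t 5))*
          ((t 1+t 4+t 5)*(t 2+t 3+t 5)))))^2 := by
  rw [filt_eq]
  repeat rw [Finset.prod_insert (by decide)]
  rw [Finset.prod_singleton]
  repeat rw [Finset.sum_insert (by decide)]
  simp only [Finset.sum_singleton]
  have h012 : (t 0 + (t 1 + (t 2))) = t 3 + t 4 + t 5 := by rw [h0]; grind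
  have h013 : (t 0 + (t 1 + (t 3))) = t 2 + t 4 + t 5 := by rw [h0]; grind
  have h014 : (t 0 + (t 1 + (t 4))) = t 2 + t 3 + t 5 := by rw [h0]; grind
  have h015 : (t 0 + (t 1 + (t 5))) = t 2 + t 3 + t 4 := by rw [h0]; grind
  have h023 : (t 0 + (t 2 + (t 3))) = t 1 + t 4 + t 5 := by rw [h0]; grind
  have h024 : (t 0 + (t 2 + (t 4))) = t 1 + t 3 + t 5 := by rw [h0]; grind
  have h025 : (t 0 + (t 2 + (t 5))) = t 1 + t 3 + t 4 := by rw [h0]; grind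
  have h034 : (t 0 + (t 3 + (t 4))) = t 1 + t 2 + t 5 := by rw [h0]; grind
  have h035 : (t 0 + (t 3 + (t 5))) = t 1 + t 2 + t 4 := by rw [h0]; grind
  have h045 : (t 0 + (t 4 + (t 5))) = t 1 + t 2 + t 3 := by rw [h0]; grind
  have k0 : (t 1 + (t 2 + (t 3 + (t 4 + (t 5))))) = t 0 := by rw [h0]; ring
  have k1 : (t 0 + (t 2 + (t 3 + (t 4 + (t 5))))) = t 1 := by rw [h0]; grind
  have k2 : (t 0 + (t 1 + (t 3 + (t 4 + (t 5))))) = t 2 := by rw [h0]; grind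
  have k3 : (t 0 + (t 1 + (t 2 + (t 4 + (t 5))))) = t 3 := by rw [h0]; grind
  have k4 : (t 0 + (t 1 + (t 2 + (t 3 + (t 5))))) = t 4 := by rw [h0]; grind
  have k5 : (t 0 + (t 1 + (t 2 + (t 3 + (t 4))))) = t 5 := by rw [h0]; grind
  rw [h012, h013, h014, h015, h023, h024, h025, h034, h035, h045, k0, k1, k2, k3, k4, k5]
  simp only [add_assoc]
  generalize t 1 + (t 2 + t 3) = y0
  generalize t 1 + (t 2 + t 4) = y1
  generalize t 1 + (t 2 + t 5) = y2
  generalize t 1 + (t 3 + t 4) = y3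
  generalize t 1 + (t 3 + t 5) = y4
  generalize t 1 + (t 4 + t 5) = y5
  generalize t 2 + (t 3 + t 4) = y6
  generalize t 2 + (t 3 + t 5) = y7
  generalize t 2 + (t 4 + t 5) = y8
  generalize t 3 + (t 4 + t 5) = y9
  ring

theorem map_e1 {R : Type*} [CommRing R] (φ : MvPolynomial (Fin 6) (ZMod 2) →+* R) (t : Fin 6 → R)
    (ht : ∀ i, φ (X i) = t i) :
    φ (e 1) = t 0 + t 1 + t 2 + t 3 + t 4 + t 5 := by
  have hset : powersetCard 1 (univ : Finset (Fin 6)) =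
    {{0},{1},{2},{3},{4},{5}} := by
    decide +kernel
  rw [e, esymm, hset]
  repeat rw [Finset.sum_insert (by decide)]
  rw [Finset.sum_singleton]
  simp only [Finset.prod_singleton, map_add, map_mul, ht]
  ring

theorem map_e2 {R : Type*} [CommRing R] (φ : MvPolynomial (Fin 6) (ZMod 2) →+* R) (t : Fin 6 → R)
    (ht : ∀ i, φ (X i) = t i) :
    φ (e 2) = t 0*t 1 + t 0*t 2 + t 0*t 3 + t 0*t 4 + t 0*t 5 + t 1*t 2 + t 1*t 3 + t 1*t 4 + t 1*t 5 + t 2*t 3 + t 2*t 4 + t 2*t 5 + t 3*t 4 + t 3*t 5 + t 4*t 5 := by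
  have hset : powersetCard 2 (univ : Finset (Fin 6)) =
    {{0,1},{0,2},{0,3},{0,4},{0,5},{1,2},{1,3},{1,4},{1,5},{2,3},{2,4},{2,5},{3,4},{3,5},{4,5}} := by
    decide +kernel
  rw [e, esymm, hset]
  repeat rw [Finset.sum_insert (by decide)]
  rw [Finset.sum_singleton]
  repeat rw [Finset.prod_insert (by decide)]
  simp only [Finset.prod_singleton, map_add, map_mul, ht]
  ring

theorem map_e3 {R : Type*} [CommRing R] (φ : MvPolynomial (Fin 6) (ZMod 2) →+* R) (t : Fin 6 → R)
    (ht : ∀ i, φ (X i) = t i) :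
    φ (e 3) = t 0*t 1*t 2 + t 0*t 1*t 3 + t 0*t 1*t 4 + t 0*t 1*t 5 + t 0*t 2*t 3 + t 0*t 2*t 4 + t 0*t 2*t 5 + t 0*t 3*t 4 + t 0*t 3*t 5 + t 0*t 4*t 5 + t 1*t 2*t 3 + t 1*t 2*t 4 + t 1*t 2*t 5 + t 1*t 3*t 4 + t 1*t 3*t 5 + t 1*t 4*t 5 + t 2*t 3*t 4 + t 2*t 3*t 5 + t 2*t 4*t 5 + t 3*t 4*t 5 := by
  have hset : powersetCard 3 (univ : Finset (Fin 6)) =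
    {{0,1,2},{0,1,3},{0,1,4},{0,1,5},{0,2,3},{0,2,4},{0,2,5},{0,3,4},{0,3,5},{0,4,5},{1,2,3},{1,2,4},{1,2,5},{1,3,4},{1,3,5},{1,4,5},{2,3,4},{2,3,5},{2,4,5},{3,4,5}} := by
    decide +kernel
  rw [e, esymm, hset]
  repeat rw [Finset.sum_insert (by decide)]
  rw [Finset.sum_singleton]
  repeat rw [Finset.prod_insert (by decide)]
  simp only [Finset.prod_singleton, map_add, map_mul, ht]
  ring

theorem map_e4 {R : Type*} [CommRing R] (φ : MvPolynomial (Fin 6) (ZMod 2) →+* R) (t : Fin 6 → R)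
    (ht : ∀ i, φ (X i) = t i) :
    φ (e 4) = t 0*t 1*t 2*t 3 + t 0*t 1*t 2*t 4 + t 0*t 1*t 2*t 5 + t 0*t 1*t 3*t 4 + t 0*t 1*t 3*t 5 + t 0*t 1*t 4*t 5 + t 0*t 2*t 3*t 4 + t 0*t 2*t 3*t 5 + t 0*t 2*t 4*t 5 + t 0*t 3*t 4*t 5 + t 1*t 2*t 3*t 4 + t 1*t 2*t 3*t 5 + t 1*t 2*t 4*t 5 + t 1*t 3*t 4*t 5 + t 2*t 3*t 4*t 5 := by
  have hset : powersetCard 4 (univ : Finset (Fin 6)) =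
    {{0,1,2,3},{0,1,2,4},{0,1,2,5},{0,1,3,4},{0,1,3,5},{0,1,4,5},{0,2,3,4},{0,2,3,5},{0,2,4,5},{0,3,4,5},{1,2,3,4},{1,2,3,5},{1,2,4,5},{1,3,4,5},{2,3,4,5}} := by
    decide +kernel
  rw [e, esymm, hset]
  repeat rw [Finset.sum_insert (by decide)]
  rw [Finset.sum_singleton]
  repeat rw [Finset.prod_insert (by decide)]
  simp only [Finset.prod_singleton, map_add, map_mul, ht]
  ring

theorem map_e5 {R : Type*} [CommRing R] (φ : MvPolynomial (Fin 6) (ZMod 2) →+* R) (t : Fin 6 → R)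
    (ht : ∀ i, φ (X i) = t i) :
    φ (e 5) = t 0*t 1*t 2*t 3*t 4 + t 0*t 1*t 2*t 3*t 5 + t 0*t 1*t 2*t 4*t 5 + t 0*t 1*t 3*t 4*t 5 + t 0*t 2*t 3*t 4*t 5 + t 1*t 2*t 3*t 4*t 5 := by
  have hset : powersetCard 5 (univ : Finset (Fin 6)) =
    {{0,1,2,3,4},{0,1,2,3,5},{0,1,2,4,5},{0,1,3,4,5},{0,2,3,4,5},{1,2,3,4,5}} := by
    decide +kernel
  rw [e, esymm, hset]
  repeat rw [Finset.sum_insert (by decide)]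
  rw [Finset.sum_singleton]
  repeat rw [Finset.prod_insert (by decide)]
  simp only [Finset.prod_singleton, map_add, map_mul, ht]
  ring

theorem map_e6 {R : Type*} [CommRing R] (φ : MvPolynomial (Fin 6) (ZMod 2) →+* R) (t : Fin 6 → R)
    (ht : ∀ i, φ (X i) = t i) :
    φ (e 6) = t 0*t 1*t 2*t 3*t 4*t 5 := by
  have hset : powersetCard 6 (univ : Finset (Fin 6)) =
    {{0,1,2,3,4,5}} := by
    decide +kernel
  rw [e, esymm, hset]
  rw [Finset.sum_singleton]
  repeat rw [Finset.prod_insert (by decide)]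
  simp only [Finset.prod_singleton, map_add, map_mul, ht]
  ring

/-- The identity for the images in a ring of characteristic two in which `t₀ = t₁ + ⋯ + t₅`. -/
theorem main_identity {R : Type*} [CommRing R] [CharP R 2]
    (φ : MvPolynomial (Fin 6) (ZMod 2) →+* R) (t : Fin 6 → R) (ht : ∀ i, φ (X i) = t i)
    (h0 : t 0 = t 1 + t 2 + t 3 + t 4 + t 5) :
    ∏ s ∈ (univ : Finset (Fin 6)).powerset.filter (fun s => Odd s.card), (∑ i ∈ s, t i) =
     φ (e 6) ^ 2 * (φ (e 5) ^ 4 + φ (e 2) ^ 4 * φ (e 6) ^ 2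
        + φ (e 2) ^ 2 * φ (e 3) ^ 2 * φ (e 5) ^ 2 + φ (e 3) ^ 4 * φ (e 4) ^ 2) := by
  rw [prod_odd t h0]
  obtain ⟨p, hp⟩ : ∃ p, p = t 1 + t 2 + t 3 + t 4 := ⟨_, rfl⟩
  obtain ⟨s, hs⟩ : ∃ s, s = t 1*t 2 + t 1*t 3 + t 1*t 4 + t 2*t 3 + t 2*t 4 + t 3*t 4 := ⟨_, rfl⟩
  obtain ⟨q, hq⟩ : ∃ q, q = t 1*t 2*t 3 + t 1*t 2*t 4 + t 1*t 3*t 4 + t 2*t 3*t 4 := ⟨_, rfl⟩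
  obtain ⟨r, hr⟩ : ∃ r, r = t 1*t 2*t 3*t 4 := ⟨_, rfl⟩
  have hz : t 0 = p + t 5 := by rw [h0, hp]
  have e2 : φ (e 2) = s + t 5 * p + t 0 * (p + t 5) := by
    rw [map_e2 φ t ht, hs, hp]; ring
  have e3 : φ (e 3) = q + t 5 * s + t 0 * (s + t 5 * p) := by
    rw [map_e3 φ t ht, hq, hs, hp]; ring
  have e4 : φ (e 4) = r + t 5 * q + t 0 * (q + t 5 * s) := by
    rw [map_e4 φ t ht, hr, hq, hs]; ring
  have e5 : φ (e 5) = t 5 * r + t 0 * (r + t 5 * q) := by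
    rw [map_e5 φ t ht, hr, hq]; ring
  have e6 : φ (e 6) = t 0 * (t 5 * r) := by
    rw [map_e6 φ t ht, hr]; ring
  rw [triples_four _ _ _ _ p s q r hp hs hq hr,
    pairs_four _ _ _ _ (t 5) _ p s q r hp hs hq hr rfl, final_identity, e2, e3, e4, e5, e6, ← hr,
    hz]
  have sq2 : ∀ x y : R, (x + y)^2 = x^2 + y^2 := fun x y => add_pow_char x y 2
  rw [mul_pow, sq2, sq2, sq2]
  ring

/-- the degree-32 homogeneous component of `Q` is congruent to
`e₆²·(e₅⁴ + e₂⁴e₆² + e₂²e₃²e₅² + e₃⁴e₄²)` modulo the ideal `(e₁)`. -/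
theorem c32_spinrep_minus_SU6 :
    homogeneousComponent 32 Q -
      e 6 ^ 2 * (e 5 ^ 4 + e 2 ^ 4 * e 6 ^ 2 + e 2 ^ 2 * e 3 ^ 2 * e 5 ^ 2
        + e 3 ^ 4 * e 4 ^ 2)
      ∈ Ideal.span {e 1} := by
  have hQ : homogeneousComponent 32 Q =
      ∏ s ∈ (univ : Finset (Fin 6)).powerset.filter (fun s => Odd s.card), (∑ i ∈ s, X i) := by
    have hcard : ((univ : Finset (Fin 6)).powerset.filter (fun s => Odd s.card)).card = 32 := by
      decide +kernel
    rw [Q, ← hcard]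
    apply top_component
    intro s _
    exact IsHomogeneous.sum _ _ _ (fun i _ => isHomogeneous_X _ i)
  rw [hQ, ← Ideal.Quotient.eq_zero_iff_mem]
  set φ := Ideal.Quotient.mk (Ideal.span {e 1}) with hφ
  rcases subsingleton_or_nontrivial (MvPolynomial (Fin 6) (ZMod 2) ⧸ Ideal.span {e 1}) with hS | hN
  · exact Subsingleton.elim _ _
  have : CharP (MvPolynomial (Fin 6) (ZMod 2) ⧸ Ideal.span {e 1}) 2 :=
    charP_of_injective_algebraMap (algebraMap (ZMod 2) _).injective 2
  have h1 : φ (e 1) = 0 := Ideal.Quotient.eq_zero_iff_mem.2 (Ideal.mem_span_singleton_self _)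
  rw [map_e1 φ (fun i => φ (X i)) (fun _ => rfl)] at h1
  have h0 : φ (X 0) = φ (X 1) + φ (X 2) + φ (X 3) + φ (X 4) + φ (X 5) := by
    grind
  have := main_identity φ (fun i => φ (X i)) (fun _ => rfl) h0
  simp only [map_sub, map_mul, map_add, map_pow, map_prod, map_sum]
  rw [this, sub_self]
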